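/- arXiv:1803.01587 — 2 statements merged into one kernel-verified Lean document; each statement's English description precedes it below -/
import Mathlib

section
/- Uniqueness of the zero under perturbation: Under the quantitative hypotheses (⋆), for every ε ∈ (0, ε₀] the map x ↦ y(ε,x) is injective on the closed ball B̄(p,R); in particular, for every ε ∈ (0, ε₀] there is at most one x ∈ B̄(p,R) with y(ε,x) = 0. -/
open Metric Set

/-!
Since `y₂(0, ·) = 0`, the map `ε⁻¹ • y₂(ε, ·)` is a slope in the parameter, so its derivative in `x`
stays as close to `A₂₂ ∘ π₂` as `∂_ε D_x y₂` does. Hence `A₁₁⁻¹ ∘ y₁(ε, ·)` and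
`A₂₂⁻¹ ∘ ε⁻¹ • y₂(ε, ·)` approximate the projections `π₁` and `π₂` with Lipschitz errors
`‖A₁₁⁻¹‖ * δ₁` and `‖A₂₂⁻¹‖ * δ₂`. Both are less than `1`, so together they perturb the identity by
a contraction in the max norm.
-/

open scoped NNReal

section Differentiability

variable {𝕜 : Type*} [NontriviallyNormedField 𝕜]
  {E : Type*} [NormedAddCommGroup E] [NormedSpace 𝕜 E]
  {F : Type*} [NormedAddCommGroup F] [NormedSpace 𝕜 F]

lemma hasFDerivAt_slope {f : 𝕜 → E → F} {x : E} {a b : 𝕜}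
    (ha : DifferentiableAt 𝕜 (f a) x) (hb : DifferentiableAt 𝕜 (f b) x) :
    HasFDerivAt (fun z => slope (f · z) a b) (slope (fun t => fderiv 𝕜 (f t) x) a b) x :=
  (hb.hasFDerivAt.sub ha.hasFDerivAt).const_smul (b - a)⁻¹

lemma differentiable_fderiv_prodMk_left {P : Type*} [NormedAddCommGroup P] [NormedSpace 𝕜 P]
    {f : P × E → F} (hf : ContDiff 𝕜 2 f) (x : E) :
    Differentiable 𝕜 fun t => fderiv 𝕜 (fun z => f (t, z)) x :=
  (ContDiff.fderiv (f := fun t z => f (t, z)) hf contDiff_const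
    (by norm_num : (1 : WithTop ℕ∞) + 1 ≤ 2)).differentiable one_ne_zero

end Differentiability

section MeanValue

variable {𝕜 : Type*} [RCLike 𝕜]
  {E : Type*} [NormedAddCommGroup E] [NormedSpace 𝕜 E]
  {F : Type*} [NormedAddCommGroup F] [NormedSpace 𝕜 F]

lemma norm_slope_sub_le_of_norm_deriv_sub_le {g : 𝕜 → F} {v : F} {T : Set 𝕜} {C : ℝ}
    (hT : Convex ℝ T) (hg : ∀ t ∈ T, DifferentiableAt 𝕜 g t)
    (hC : ∀ t ∈ T, ‖deriv g t - v‖ ≤ C) {a b : 𝕜} (ha : a ∈ T) (hb : b ∈ T) (hab : a ≠ b) :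
    ‖slope g a b - v‖ ≤ C := by
  have hgv (t : 𝕜) (ht : t ∈ T) : HasDerivAt (fun t => g t - t • v) (deriv g t - v) t := by
    simpa using (hg t ht).hasDerivAt.fun_sub ((hasDerivAt_id t).smul_const v)
  have hdiff : ‖(g b - b • v) - (g a - a • v)‖ ≤ C * ‖b - a‖ :=
    hT.norm_image_sub_le_of_norm_hasDerivWithin_le
      (fun t ht => (hgv t ht).hasDerivWithinAt) hC ha hb
  calc ‖slope g a b - v‖ = ‖(b - a)⁻¹ • ((g b - b • v) - (g a - a • v))‖ := by
        rw [sub_sub_sub_comm, ← sub_smul, smul_sub, inv_smul_smul₀ (sub_ne_zero.2 hab.symm),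
          slope_def_module]
    _ = ‖(g b - b • v) - (g a - a • v)‖ / ‖b - a‖ := by
        rw [norm_smul, norm_inv, inv_mul_eq_div]
    _ ≤ C := div_le_of_le_mul₀ (norm_nonneg _) ((norm_nonneg _).trans (hC a ha)) hdiff

variable [NormedSpace ℝ E]

lemma approximatesLinearOn_of_norm_fderiv_sub_le {f : E → F} {L : E →L[𝕜] F} {s : Set E}
    {c : ℝ≥0} (hs : Convex ℝ s) (hf : ∀ x ∈ s, DifferentiableAt 𝕜 f x)
    (hc : ∀ x ∈ s, ‖fderiv 𝕜 f x - L‖ ≤ c) : ApproximatesLinearOn f L s c :=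
  fun _ hx _ hx' => hs.norm_image_sub_le_of_norm_fderiv_le' hf hc hx' hx

lemma approximatesLinearOn_slope_of_norm_deriv_fderiv_sub_le {f : 𝕜 → E → F} {L : E →L[𝕜] F}
    {T : Set 𝕜} {s : Set E} {c : ℝ≥0} {a b : 𝕜} (hT : Convex ℝ T) (hs : Convex ℝ s)
    (hfa : ∀ x ∈ s, DifferentiableAt 𝕜 (f a) x) (hfb : ∀ x ∈ s, DifferentiableAt 𝕜 (f b) x)
    (hf' : ∀ t ∈ T, ∀ x ∈ s, DifferentiableAt 𝕜 (fun t => fderiv 𝕜 (f t) x) t)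
    (hc : ∀ t ∈ T, ∀ x ∈ s, ‖deriv (fun t => fderiv 𝕜 (f t) x) t - L‖ ≤ c)
    (ha : a ∈ T) (hb : b ∈ T) (hab : a ≠ b) :
    ApproximatesLinearOn (fun x => slope (f · x) a b) L s c := by
  have hslope (x : E) (hx : x ∈ s) := hasFDerivAt_slope (hfa x hx) (hfb x hx)
  refine approximatesLinearOn_of_norm_fderiv_sub_le hs
    (fun x hx => (hslope x hx).differentiableAt) fun x hx => ?_
  rw [(hslope x hx).fderiv]
  exact norm_slope_sub_le_of_norm_deriv_sub_le hT (fun t ht => hf' t ht x hx)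
    (fun t ht => hc t ht x hx) ha hb hab

end MeanValue

section Injectivity

variable {𝕜 : Type*} [NontriviallyNormedField 𝕜]
  {E : Type*} [NormedAddCommGroup E] [NormedSpace 𝕜 E]
  {X₁ : Type*} [NormedAddCommGroup X₁] [NormedSpace 𝕜 X₁]
  {X₂ : Type*} [NormedAddCommGroup X₂] [NormedSpace 𝕜 X₂]
  {Y₁ : Type*} [NormedAddCommGroup Y₁] [NormedSpace 𝕜 Y₁]
  {Y₂ : Type*} [NormedAddCommGroup Y₂] [NormedSpace 𝕜 Y₂]

lemma norm_apply_sub_le_of_approximatesLinearOn_comp {f : E → Y₁} {A : X₁ ≃L[𝕜] Y₁}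
    {P : E →L[𝕜] X₁} {s : Set E} {c : ℝ≥0}
    (hf : ApproximatesLinearOn f ((A : X₁ →L[𝕜] Y₁).comp P) s c)
    {x x' : E} (hx : x ∈ s) (hx' : x' ∈ s) (hxx' : f x = f x') :
    ‖P (x - x')‖ ≤ ‖(A.symm : Y₁ →L[𝕜] X₁)‖ * c * ‖x - x'‖ := by
  have hA : ‖A (P (x - x'))‖ ≤ c * ‖x - x'‖ := by
    simpa only [hxx', sub_self, zero_sub, norm_neg] using! hf x hx x' hx'
  calc ‖P (x - x')‖ = ‖(A.symm : Y₁ →L[𝕜] X₁) (A (P (x - x')))‖ := by simp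
    _ ≤ ‖(A.symm : Y₁ →L[𝕜] X₁)‖ * (c * ‖x - x'‖) := ContinuousLinearMap.le_opNorm_of_le _ hA
    _ = ‖(A.symm : Y₁ →L[𝕜] X₁)‖ * c * ‖x - x'‖ := (mul_assoc ..).symm

lemma injOn_prodMk_of_approximatesLinearOn {f₁ : X₁ × X₂ → Y₁} {f₂ : X₁ × X₂ → Y₂}
    {A₁ : X₁ ≃L[𝕜] Y₁} {A₂ : X₂ ≃L[𝕜] Y₂} {s : Set (X₁ × X₂)} {c₁ c₂ : ℝ≥0}
    (hf₁ : ApproximatesLinearOn f₁ ((A₁ : X₁ →L[𝕜] Y₁).comp (.fst 𝕜 X₁ X₂)) s c₁)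
    (hf₂ : ApproximatesLinearOn f₂ ((A₂ : X₂ →L[𝕜] Y₂).comp (.snd 𝕜 X₁ X₂)) s c₂)
    (hc₁ : ‖(A₁.symm : Y₁ →L[𝕜] X₁)‖ * c₁ < 1) (hc₂ : ‖(A₂.symm : Y₂ →L[𝕜] X₂)‖ * c₂ < 1) :
    InjOn (fun x => (f₁ x, f₂ x)) s := by
  intro x hx x' hx' hxx'
  by_contra hne
  have hpos : 0 < ‖x - x'‖ := norm_sub_pos_iff.2 hne
  have h₁ : ‖(x - x').1‖ < ‖x - x'‖ :=
    (norm_apply_sub_le_of_approximatesLinearOn_comp hf₁ hx hx' (congrArg Prod.fst hxx')).trans_lt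
      (mul_lt_of_lt_one_left hpos hc₁)
  have h₂ : ‖(x - x').2‖ < ‖x - x'‖ :=
    (norm_apply_sub_le_of_approximatesLinearOn_comp hf₂ hx hx' (congrArg Prod.snd hxx')).trans_lt
      (mul_lt_of_lt_one_left hpos hc₂)
  exact (max_lt h₁ h₂).ne (Prod.norm_def _).symm

end Injectivity

lemma mul_lt_one_of_add_mul_lt_inv_mul {a r η δ : ℝ} (ha : 0 ≤ a) (hr : 0 < r) (hη : 0 ≤ η)
    (h : η + δ * r < a⁻¹ * r) : a * δ < 1 := by
  have hδ : δ < a⁻¹ := lt_of_mul_lt_mul_right (by linarith) hr.le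
  obtain rfl | ha := ha.eq_or_lt
  · simp
  · exact (lt_inv_mul_iff₀ ha).1 (by simpa using hδ)

theorem uniqueness_of_zero_under_perturbation_general
    {𝕜 : Type*} [RCLike 𝕜]
    {X₁ X₂ Y₁ Y₂ : Type*}
    [NormedAddCommGroup X₁] [NormedSpace ℝ X₁] [NormedSpace 𝕜 X₁]
    [NormedAddCommGroup X₂] [NormedSpace ℝ X₂] [NormedSpace 𝕜 X₂]
    [NormedAddCommGroup Y₁] [NormedSpace 𝕜 Y₁]
    [NormedAddCommGroup Y₂] [NormedSpace 𝕜 Y₂]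
    {y : 𝕜 × (X₁ × X₂) → Y₁ × Y₂} {T : Set 𝕜} {s : Set (X₁ × X₂)}
    (hT : Convex ℝ T) (hT₀ : 0 ∈ T) (hs : Convex ℝ s)
    (hy : ContDiff 𝕜 2 y) (hy₂ : ∀ x ∈ s, (y (0, x)).2 = 0)
    (A₁₁ : X₁ ≃L[𝕜] Y₁) (A₂₂ : X₂ ≃L[𝕜] Y₂) {δ₁ δ₂ : ℝ≥0}
    (hδ₁ : ∀ ε ∈ T, ∀ x ∈ s, ‖fderiv 𝕜 (fun x' => (y (ε, x')).1) x
      - (A₁₁ : X₁ →L[𝕜] Y₁).comp (.fst 𝕜 X₁ X₂)‖ ≤ δ₁)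
    (hδ₂ : ∀ ε ∈ T, ∀ x ∈ s, ‖deriv (fun ε' => fderiv 𝕜 (fun x' => (y (ε', x')).2) x) ε
      - (A₂₂ : X₂ →L[𝕜] Y₂).comp (.snd 𝕜 X₁ X₂)‖ ≤ δ₂)
    (hm₁ : ‖(A₁₁.symm : Y₁ →L[𝕜] X₁)‖ * δ₁ < 1) (hm₂ : ‖(A₂₂.symm : Y₂ →L[𝕜] X₂)‖ * δ₂ < 1)
    {ε : 𝕜} (hε : ε ∈ T) (hε₀ : ε ≠ 0) :
    InjOn (fun x => y (ε, x)) s := by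
  have hdiff (t : 𝕜) : Differentiable 𝕜 fun x => y (t, x) :=
    (hy.comp (contDiff_prodMk_right t)).differentiable two_ne_zero
  have happrox₁ := approximatesLinearOn_of_norm_fderiv_sub_le hs
    (fun x _ => (hdiff ε x).fst) (hδ₁ ε hε)
  have happrox₂ := approximatesLinearOn_slope_of_norm_deriv_fderiv_sub_le hT hs
    (fun x _ => (hdiff 0 x).snd) (fun x _ => (hdiff ε x).snd)
    (fun t _ x _ => differentiable_fderiv_prodMk_left hy.snd x t) hδ₂ hT₀ hε hε₀.symm
  intro x hx x' hx' hxx'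
  refine injOn_prodMk_of_approximatesLinearOn happrox₁ happrox₂ hm₁ hm₂ hx hx' ?_
  have hy_eq : y (ε, x) = y (ε, x') := hxx'
  simp only [slope_def_module, hy₂ x hx, hy₂ x' hx', hy_eq]

/-- **Uniqueness of the zero under perturbation.**
Under the quantitative hypotheses (⋆), for every `ε ∈ (0, ε₀]` the map
`x ↦ y (ε, x)` is injective on the closed ball; in particular there is at most
one zero in the closed ball. -/
theorem uniqueness_of_zero_under_perturbation
    {X₁ X₂ : Type*}
    [NormedAddCommGroup X₁] [NormedSpace ℝ X₁] [FiniteDimensional ℝ X₁]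
    [NormedAddCommGroup X₂] [NormedSpace ℝ X₂] [FiniteDimensional ℝ X₂]
    (y : ℝ × (X₁ × X₂) → X₁ × X₂)
    (ε₀ R : ℝ) (hε₀ : 0 < ε₀) (hR : 0 < R)
    (p : X₁ × X₂)
    (hy : ContDiff ℝ 2 y)
    (hyp : y (0, p) = 0)
    (hy₂ : ∀ x ∈ closedBall p R, (y (0, x)).2 = 0)
    (A₁₁ : X₁ ≃L[ℝ] X₁) (A₂₂ : X₂ ≃L[ℝ] X₂)
    (hA₁₁ : (A₁₁ : X₁ →L[ℝ] X₁) = fderiv ℝ (fun x₁ => (y (0, (x₁, p.2))).1) p.1)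
    (hA₂₂ : (A₂₂ : X₂ →L[ℝ] X₂)
      = deriv (fun ε => fderiv ℝ (fun x₂ => (y (ε, (p.1, x₂))).2) p.2) 0)
    (δ₁ δ₂ η₁ η₂ : ℝ)
    (hδ₁0 : 0 ≤ δ₁) (hδ₂0 : 0 ≤ δ₂) (hη₁0 : 0 ≤ η₁) (hη₂0 : 0 ≤ η₂)
    (hδ₁ : ∀ ε ∈ Icc (0:ℝ) ε₀, ∀ x ∈ closedBall p R,
      ‖fderiv ℝ (fun x' => (y (ε, x')).1) x
        - (A₁₁ : X₁ →L[ℝ] X₁).comp (ContinuousLinearMap.fst ℝ X₁ X₂)‖ ≤ δ₁)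
    (hδ₂ : ∀ ε ∈ Icc (0:ℝ) ε₀, ∀ x ∈ closedBall p R,
      ‖deriv (fun ε' => fderiv ℝ (fun x' => (y (ε', x')).2) x) ε
        - (A₂₂ : X₂ →L[ℝ] X₂).comp (ContinuousLinearMap.snd ℝ X₁ X₂)‖ ≤ δ₂)
    (hη₁ : ∀ ε ∈ Icc (0:ℝ) ε₀, ‖deriv (fun ε' => (y (ε', p)).1) ε‖ ≤ η₁)
    (hη₂ : ∀ ε ∈ Icc (0:ℝ) ε₀, ‖deriv (fun ε' => (y (ε', p)).2) ε‖ ≤ η₂)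
    (hm₁ : ε₀ * η₁ + δ₁ * R < ‖(A₁₁.symm : X₁ →L[ℝ] X₁)‖⁻¹ * R)
    (hm₂ : η₂ + δ₂ * R < ‖(A₂₂.symm : X₂ →L[ℝ] X₂)‖⁻¹ * R) :
    (∀ ε ∈ Ioc (0:ℝ) ε₀, Set.InjOn (fun x => y (ε, x)) (closedBall p R)) ∧
    ∀ ε ∈ Ioc (0:ℝ) ε₀, ∀ x ∈ closedBall p R, ∀ x' ∈ closedBall p R,
      y (ε, x) = 0 → y (ε, x') = 0 → x = x' := by
  lift δ₁ to ℝ≥0 using hδ₁0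
  lift δ₂ to ℝ≥0 using hδ₂0
  have hδm₁ : ‖(A₁₁.symm : X₁ →L[ℝ] X₁)‖ * δ₁ < 1 :=
    mul_lt_one_of_add_mul_lt_inv_mul (norm_nonneg _) hR (mul_nonneg hε₀.le hη₁0) hm₁
  have hδm₂ : ‖(A₂₂.symm : X₂ →L[ℝ] X₂)‖ * δ₂ < 1 :=
    mul_lt_one_of_add_mul_lt_inv_mul (norm_nonneg _) hR hη₂0 hm₂
  have hinj (ε : ℝ) (hε : ε ∈ Ioc 0 ε₀) : InjOn (fun x => y (ε, x)) (closedBall p R) :=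
    uniqueness_of_zero_under_perturbation_general (convex_Icc 0 ε₀) (left_mem_Icc.2 hε₀.le)
      (convex_closedBall p R) hy hy₂ A₁₁ A₂₂ hδ₁ hδ₂ hδm₁ hδm₂ (Ioc_subset_Icc_self hε) hε.1.ne'
  exact ⟨hinj, fun ε hε x hx x' hx' h h' => hinj ε hε hx hx' (h.trans h'.symm)⟩
end

section
/- Transversal intersection of center-unstable and center-stable manifolds: In the NHIM setting with equal-dimensional stable and unstable directions, suppose that for some identification ℝ^k = X₁ × X₂ and some point p and radius R > 0 with the closed ball B̄(p,R) contained in U, the distance function y satisfies the quantitative hypotheses (⋆). Fix ε ∈ (0, ε₀]. Then there exists x* ∈ B(p,R) with q := w^{cu}(ε, cu(ε, x*, z*)) = w^{cs}(ε, cs(ε, x*, z*)), and, writing G^{cu}(x,z) := (x, π_y w^{cu}(ε, cu(ε,x,z)), z) and G^{cs}(x,z) := (x, π_y w^{cs}(ε, cs(ε,x,z)), z) for the graph parameterizations of the two manifolds over U × V, the ranges of the derivatives D G^{cu}(x*, z*) and D G^{cs}(x*, z*) (each a linear map ℝ^k × ℝ^c → ℝ^{2k+c}) together span ℝ^{2k+c};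 i.e. the manifolds intersect transversally at q. -/
open Metric Set

/-!
Newton's method with the constant block-diagonal approximate derivative `A₁₁ × A₂₂` finds zeros of
the distance function `y(ε, ·)`. The component `y₂(ε, ·)` degenerates as `ε → 0`, but it vanishes
identically at `ε = 0`, so by the mean value inequality in `ε` the rescaled component `ε⁻¹ y₂(ε, ·)`
inherits the bounds on `∂y₂/∂ε`: its derivative is `δ₂`-close to `A₂₂ ∘ π₂` and its value at `p` is
at most `η₂`. The two Newton components are then contractions mapping `B̄(p, R)` into the balls of
radius `R` around `p₁` and `p₂`, and they have a common fixed point, which is a zero of `y(ε, ·)`.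
The same contraction bound makes `D_x y(ε, x*)` surjective (Neumann series), and this derivative is
the difference of the `x`-derivatives of the two graphs, so their tangent spaces together span.
-/

section FixedPoint

open scoped NNReal

theorem exists_isFixedPt_mem_ball {X : Type*} [MetricSpace X] [CompleteSpace X] {T : X → X} {p : X}
    {R : ℝ} {K : ℝ≥0} (hR : 0 ≤ R) (hK : K < 1) (hT : LipschitzOnWith K T (closedBall p R))
    (hmaps : MapsTo T (closedBall p R) (ball p R)) :
    ∃ x ∈ ball p R, Function.IsFixedPt T x := by
  have hself : MapsTo T (closedBall p R) (closedBall p R) :=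
    hmaps.mono_right ball_subset_closedBall
  have hcontr : ContractingWith K (hself.restrict T _ _) := ⟨hK, hT.mapsToRestrict hself⟩
  obtain ⟨x, hx, hfix, -⟩ := hcontr.exists_fixedPoint' isClosed_closedBall.isComplete hself
    (mem_closedBall_self hR) (edist_ne_top _ _)
  exact ⟨x, hfix ▸ hmaps hx, hfix⟩

theorem exists_common_fixedPt_mem_ball_prod {X₁ X₂ : Type*} [MetricSpace X₁] [CompleteSpace X₁]
    [MetricSpace X₂] [CompleteSpace X₂] {f₁ : X₁ × X₂ → X₁} {f₂ : X₁ × X₂ → X₂} {p : X₁ × X₂}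
    {R : ℝ} {K₁ K₂ : ℝ≥0} (hR : 0 ≤ R) (hK₁ : K₁ < 1) (hK₂ : K₂ < 1)
    (hf₁ : LipschitzOnWith K₁ f₁ (closedBall p R)) (hf₂ : LipschitzOnWith K₂ f₂ (closedBall p R))
    (hmaps₁ : MapsTo f₁ (closedBall p R) (ball p.1 R))
    (hmaps₂ : MapsTo f₂ (closedBall p R) (ball p.2 R)) :
    ∃ x ∈ ball p R, f₁ x = x.1 ∧ f₂ x = x.2 := by
  obtain ⟨x, hx, hfix⟩ := exists_isFixedPt_mem_ball hR (max_lt hK₁ hK₂) (hf₁.prodMk hf₂)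
    fun x hx => by
      rw [← ball_prod_same]
      exact ⟨hmaps₁ hx, hmaps₂ hx⟩
  exact ⟨x, hx, Prod.ext_iff.mp hfix⟩

theorem mapsTo_closedBall_ball_of_lipschitzOnWith {X Y : Type*} [PseudoMetricSpace X]
    [PseudoMetricSpace Y] {f : X → Y} {p : X} {q : Y} {R r : ℝ} {K : ℝ≥0}
    (hf : LipschitzOnWith K f (closedBall p R)) (hr : K * R + dist (f p) q < r) :
    MapsTo f (closedBall p R) (ball q r) := fun x hx => calc
  dist (f x) q ≤ dist (f x) (f p) + dist (f p) q := dist_triangle _ _ _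
  _ ≤ K * dist x p + dist (f p) q := by
    gcongr
    exact hf.dist_le_mul x hx p (mem_closedBall_self (dist_nonneg.trans hx))
  _ ≤ K * R + dist (f p) q := by
    gcongr
    exact hx
  _ < r := hr

end FixedPoint

section PerturbedIsomorphism

open scoped NNReal

variable {𝕜 X Y Z : Type*} [NontriviallyNormedField 𝕜] [NormedAddCommGroup X] [NormedSpace 𝕜 X]
  [NormedAddCommGroup Y] [NormedSpace 𝕜 Y] [NormedAddCommGroup Z] [NormedSpace 𝕜 Z]

theorem nnnorm_sub_symm_comp_le {A : Y ≃L[𝕜] Z} {π : X →L[𝕜] Y} {B : X →L[𝕜] Z} {d : ℝ≥0}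
    (hB : ‖B - (A : Y →L[𝕜] Z).comp π‖ ≤ d) :
    ‖π - (A.symm : Z →L[𝕜] Y).comp B‖₊ ≤ ‖(A.symm : Z →L[𝕜] Y)‖₊ * d := by
  have hfactor : π - (A.symm : Z →L[𝕜] Y).comp B
      = -(A.symm : Z →L[𝕜] Y).comp (B - (A : Y →L[𝕜] Z).comp π) := by
    ext v
    simp
  rw [hfactor, nnnorm_neg]
  exact (ContinuousLinearMap.opNNNorm_comp_le _ _).trans (by gcongr; exact hB)

theorem surjective_of_norm_id_sub_symm_comp_lt_one [CompleteSpace X] (A : X ≃L[𝕜] Z)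
    {B : X →L[𝕜] Z}
    (h : ‖ContinuousLinearMap.id 𝕜 X - (A.symm : Z →L[𝕜] X).comp B‖ < 1) :
    Function.Surjective B := by
  have hunit : IsUnit ((A.symm : Z →L[𝕜] X).comp B) := by
    rw [← sub_sub_cancel (ContinuousLinearMap.id 𝕜 X) ((A.symm : Z →L[𝕜] X).comp B)]
    exact isUnit_one_sub_of_norm_lt_one h
  intro z
  obtain ⟨x, hx⟩ := (ContinuousLinearMap.isUnit_iff_bijective.mp hunit).2 (A.symm z)
  exact ⟨x, A.symm.injective hx⟩

theorem surjective_prod_of_norm_sub_comp_le {X₁ X₂ Y₁ Y₂ : Type*}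
    [NormedAddCommGroup X₁] [NormedSpace 𝕜 X₁] [CompleteSpace X₁]
    [NormedAddCommGroup X₂] [NormedSpace 𝕜 X₂] [CompleteSpace X₂]
    [NormedAddCommGroup Y₁] [NormedSpace 𝕜 Y₁] [NormedAddCommGroup Y₂] [NormedSpace 𝕜 Y₂]
    {A₁ : X₁ ≃L[𝕜] Y₁} {A₂ : X₂ ≃L[𝕜] Y₂} {d₁ d₂ : ℝ≥0}
    {B₁ : X₁ × X₂ →L[𝕜] Y₁} {B₂ : X₁ × X₂ →L[𝕜] Y₂}
    (hB₁ : ‖B₁ - (A₁ : X₁ →L[𝕜] Y₁).comp (ContinuousLinearMap.fst 𝕜 X₁ X₂)‖ ≤ d₁)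
    (hB₂ : ‖B₂ - (A₂ : X₂ →L[𝕜] Y₂).comp (ContinuousLinearMap.snd 𝕜 X₁ X₂)‖ ≤ d₂)
    (hK₁ : ‖(A₁.symm : Y₁ →L[𝕜] X₁)‖₊ * d₁ < 1) (hK₂ : ‖(A₂.symm : Y₂ →L[𝕜] X₂)‖₊ * d₂ < 1) :
    Function.Surjective (B₁.prod B₂) := by
  refine surjective_of_norm_id_sub_symm_comp_lt_one (A₁.prodCongr A₂) ?_
  have hblock : ContinuousLinearMap.id 𝕜 (X₁ × X₂)
        - ((A₁.prodCongr A₂).symm : Y₁ × Y₂ →L[𝕜] X₁ × X₂).comp (B₁.prod B₂)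
      = (ContinuousLinearMap.fst 𝕜 X₁ X₂ - (A₁.symm : Y₁ →L[𝕜] X₁).comp B₁).prod
          (ContinuousLinearMap.snd 𝕜 X₁ X₂ - (A₂.symm : Y₂ →L[𝕜] X₂).comp B₂) := rfl
  rw [hblock, ContinuousLinearMap.opNorm_prod, Prod.norm_def]
  exact max_lt ((nnnorm_sub_symm_comp_le hB₁).trans_lt hK₁)
    ((nnnorm_sub_symm_comp_le hB₂).trans_lt hK₂)

end PerturbedIsomorphism

section Newton

open scoped NNReal

theorem mul_mul_add_mul_lt_of_add_mul_lt_inv_mul {a d e R : ℝ} (hd : 0 ≤ d) (he : 0 ≤ e)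
    (hR : 0 < R) (h : e + d * R < a⁻¹ * R) : a * d * R + a * e < R := by
  have ha : 0 < a := inv_pos.mp <| pos_of_mul_pos_left (lt_of_le_of_lt (by positivity) h) hR.le
  rw [lt_inv_mul_iff₀ ha] at h
  linarith

variable {X Y Z : Type*} [NormedAddCommGroup X] [NormedSpace ℝ X] [NormedAddCommGroup Y]
  [NormedSpace ℝ Y] [NormedAddCommGroup Z] [NormedSpace ℝ Z]

/-- One component `x ↦ π x - A⁻¹ (g x)` of the simplified Newton iteration for the equation
`g x = 0`, where the constant map `A ∘ π` replaces the derivative of `g`. -/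
def newtonComponent (A : Y ≃L[ℝ] Z) (π : X →L[ℝ] Y) (g : X → Z) (x : X) : Y :=
  π x - A.symm (g x)

variable {A : Y ≃L[ℝ] Z} {π : X →L[ℝ] Y} {g : X → Z} {p x : X} {R e : ℝ} {d : ℝ≥0}

theorem newtonComponent_eq_iff : newtonComponent A π g x = π x ↔ g x = 0 := by
  simp [newtonComponent]

theorem lipschitzOnWith_newtonComponent {s : Set X} (hs : Convex ℝ s)
    (hg : ∀ x ∈ s, DifferentiableAt ℝ g x)
    (hd : ∀ x ∈ s, ‖fderiv ℝ g x - (A : Y →L[ℝ] Z).comp π‖ ≤ d) :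
    LipschitzOnWith (‖(A.symm : Z →L[ℝ] Y)‖₊ * d) (newtonComponent A π g) s :=
  hs.lipschitzOnWith_of_nnnorm_hasFDerivWithin_le
    (fun x hx => (π.hasFDerivAt.sub
      ((A.symm : Z →L[ℝ] Y).hasFDerivAt.comp x (hg x hx).hasFDerivAt)).hasFDerivWithinAt)
    fun x hx => nnnorm_sub_symm_comp_le (hd x hx)

theorem dist_newtonComponent_le :
    dist (newtonComponent A π g x) (π x) ≤ ‖(A.symm : Z →L[ℝ] Y)‖ * ‖g x‖ := by
  rw [newtonComponent, dist_eq_norm, sub_sub_cancel_left, norm_neg]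
  exact (A.symm : Z →L[ℝ] Y).le_opNorm _

theorem nnnorm_symm_mul_lt_one (hR : 0 < R) (he : 0 ≤ e)
    (h : e + d * R < ‖(A.symm : Z →L[ℝ] Y)‖⁻¹ * R) : ‖(A.symm : Z →L[ℝ] Y)‖₊ * d < 1 := by
  have hlt := mul_mul_add_mul_lt_of_add_mul_lt_inv_mul d.coe_nonneg he hR h
  have hae : 0 ≤ ‖(A.symm : Z →L[ℝ] Y)‖ * e := by positivity
  rw [← NNReal.coe_lt_coe, NNReal.coe_mul, coe_nnnorm, NNReal.coe_one]
  exact lt_of_mul_lt_mul_right (by linarith) hR.le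

theorem mapsTo_newtonComponent (hR : 0 < R) (hg : ∀ x ∈ closedBall p R, DifferentiableAt ℝ g x)
    (hd : ∀ x ∈ closedBall p R, ‖fderiv ℝ g x - (A : Y →L[ℝ] Z).comp π‖ ≤ d) (he : ‖g p‖ ≤ e)
    (h : e + d * R < ‖(A.symm : Z →L[ℝ] Y)‖⁻¹ * R) :
    MapsTo (newtonComponent A π g) (closedBall p R) (ball (π p) R) := by
  refine mapsTo_closedBall_ball_of_lipschitzOnWith
    (lipschitzOnWith_newtonComponent (convex_closedBall p R) hg hd) ?_
  rw [NNReal.coe_mul, coe_nnnorm]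
  calc ‖(A.symm : Z →L[ℝ] Y)‖ * d * R + dist (newtonComponent A π g p) (π p)
      ≤ ‖(A.symm : Z →L[ℝ] Y)‖ * d * R + ‖(A.symm : Z →L[ℝ] Y)‖ * e := by
        gcongr
        exact dist_newtonComponent_le.trans (by gcongr)
    _ < R := mul_mul_add_mul_lt_of_add_mul_lt_inv_mul d.coe_nonneg ((norm_nonneg _).trans he) hR h

end Newton

section ProductZero

open scoped NNReal

variable {X₁ X₂ Y₁ Y₂ : Type*}
  [NormedAddCommGroup X₁] [NormedSpace ℝ X₁] [CompleteSpace X₁]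
  [NormedAddCommGroup X₂] [NormedSpace ℝ X₂] [CompleteSpace X₂]
  [NormedAddCommGroup Y₁] [NormedSpace ℝ Y₁] [NormedAddCommGroup Y₂] [NormedSpace ℝ Y₂]
  {A₁ : X₁ ≃L[ℝ] Y₁} {A₂ : X₂ ≃L[ℝ] Y₂} {d₁ d₂ : ℝ≥0}

theorem exists_common_zero_mem_ball_surjective_fderiv {g₁ : X₁ × X₂ → Y₁} {g₂ : X₁ × X₂ → Y₂}
    {p : X₁ × X₂} {R e₁ e₂ : ℝ} (hR : 0 < R)
    (hg₁ : ∀ x ∈ closedBall p R, DifferentiableAt ℝ g₁ x)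
    (hg₂ : ∀ x ∈ closedBall p R, DifferentiableAt ℝ g₂ x)
    (hd₁ : ∀ x ∈ closedBall p R, ‖fderiv ℝ g₁ x
      - (A₁ : X₁ →L[ℝ] Y₁).comp (ContinuousLinearMap.fst ℝ X₁ X₂)‖ ≤ d₁)
    (hd₂ : ∀ x ∈ closedBall p R, ‖fderiv ℝ g₂ x
      - (A₂ : X₂ →L[ℝ] Y₂).comp (ContinuousLinearMap.snd ℝ X₁ X₂)‖ ≤ d₂)
    (he₁ : ‖g₁ p‖ ≤ e₁) (he₂ : ‖g₂ p‖ ≤ e₂)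
    (hm₁ : e₁ + d₁ * R < ‖(A₁.symm : Y₁ →L[ℝ] X₁)‖⁻¹ * R)
    (hm₂ : e₂ + d₂ * R < ‖(A₂.symm : Y₂ →L[ℝ] X₂)‖⁻¹ * R) :
    ∃ x ∈ ball p R, g₁ x = 0 ∧ g₂ x = 0 ∧
      Function.Surjective ((fderiv ℝ g₁ x).prod (fderiv ℝ g₂ x)) := by
  have hK₁ := nnnorm_symm_mul_lt_one hR ((norm_nonneg _).trans he₁) hm₁
  have hK₂ := nnnorm_symm_mul_lt_one hR ((norm_nonneg _).trans he₂) hm₂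
  obtain ⟨x, hx, hfix₁, hfix₂⟩ := exists_common_fixedPt_mem_ball_prod hR.le hK₁ hK₂
    (lipschitzOnWith_newtonComponent (convex_closedBall p R) hg₁ hd₁)
    (lipschitzOnWith_newtonComponent (convex_closedBall p R) hg₂ hd₂)
    (mapsTo_newtonComponent hR hg₁ hd₁ he₁ hm₁) (mapsTo_newtonComponent hR hg₂ hd₂ he₂ hm₂)
  have hxR := ball_subset_closedBall hx
  exact ⟨x, hx, newtonComponent_eq_iff.mp hfix₁, newtonComponent_eq_iff.mp hfix₂,
    surjective_prod_of_norm_sub_comp_le (hd₁ x hxR) (hd₂ x hxR) hK₁ hK₂⟩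

end ProductZero

section Slices

variable {𝕜 T X Y : Type*} [NontriviallyNormedField 𝕜] [NormedAddCommGroup T] [NormedSpace 𝕜 T]
  [NormedAddCommGroup X] [NormedSpace 𝕜 X] [NormedAddCommGroup Y] [NormedSpace 𝕜 Y]

theorem differentiableAt_slice_right {f : T × X → Y} {t : T} {x : X}
    (hf : DifferentiableAt 𝕜 f (t, x)) : DifferentiableAt 𝕜 (fun x => f (t, x)) x :=
  hf.comp x (hasFDerivAt_prodMk_right t x).differentiableAt

theorem differentiableAt_slice_left {f : T × X → Y} {t : T} {x : X}
    (hf : DifferentiableAt 𝕜 f (t, x)) : DifferentiableAt 𝕜 (fun t => f (t, x)) t :=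
  hf.comp t (hasFDerivAt_prodMk_left t x).differentiableAt

theorem differentiableAt_fderiv_slice {f : T × X → Y} {t : T} {x : X}
    (hf : ContDiffAt 𝕜 2 f (t, x)) :
    DifferentiableAt 𝕜 (fun t => fderiv 𝕜 (fun x => f (t, x)) x) t :=
  (ContDiffAt.fderiv (f := fun t x => f (t, x)) (g := fun _ => x) (m := 1) hf contDiffAt_const
    one_add_one_eq_two.le).differentiableAt one_ne_zero

end Slices

section Rescaling

variable {X Y : Type*} [NormedAddCommGroup X] [NormedSpace ℝ X] [NormedAddCommGroup Y]
  [NormedSpace ℝ Y]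

theorem norm_inv_smul_sub_le_of_norm_deriv_sub_le {f : ℝ → Y} {v : Y} {t C : ℝ} (ht : 0 < t)
    (hf0 : f 0 = 0) (hf : ∀ s ∈ Icc 0 t, DifferentiableAt ℝ f s)
    (hC : ∀ s ∈ Icc 0 t, ‖deriv f s - v‖ ≤ C) : ‖t⁻¹ • f t - v‖ ≤ C := by
  have hmean := (convex_Icc 0 t).norm_image_sub_le_of_norm_hasDerivWithin_le
    (fun s hs => ((hf s hs).hasDerivAt.fun_sub
      (by simpa using (hasDerivAt_id s).smul_const v)).hasDerivWithinAt)
    hC (left_mem_Icc.mpr ht.le) (right_mem_Icc.mpr ht.le)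
  rw [← inv_smul_smul₀ ht.ne' v, ← smul_sub, norm_smul, norm_inv, Real.norm_of_nonneg ht.le,
    inv_mul_le_iff₀ ht, mul_comm]
  simpa [hf0, abs_of_pos ht] using hmean

theorem fderiv_eq_zero_of_eqOn_zero {f : X → Y} {s : Set X} {x : X} (hs : UniqueDiffWithinAt ℝ s x)
    (hx : x ∈ s) (hf : DifferentiableAt ℝ f x) (h0 : EqOn f 0 s) : fderiv ℝ f x = 0 :=
  hs.eq hf.hasFDerivAt.hasFDerivWithinAt ((hasFDerivWithinAt_const 0 x s).congr h0 (h0 hx))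

theorem uniqueDiffOn_closedBall (p : X) {R : ℝ} (hR : 0 < R) :
    UniqueDiffOn ℝ (closedBall p R) :=
  uniqueDiffOn_convex (convex_closedBall p R)
    ⟨p, ball_subset_interior_closedBall (mem_ball_self hR)⟩

theorem norm_fderiv_inv_smul_sub_le {f : ℝ × X → Y} {B : X →L[ℝ] Y} {s : Set X} {x : X} {t C : ℝ}
    (ht : 0 < t) (hs : UniqueDiffWithinAt ℝ s x) (hx : x ∈ s)
    (hf : ∀ r ∈ Icc 0 t, ContDiffAt ℝ 2 f (r, x)) (h0 : EqOn (fun x => f (0, x)) 0 s)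
    (hC : ∀ r ∈ Icc 0 t, ‖deriv (fun r => fderiv ℝ (fun x => f (r, x)) x) r - B‖ ≤ C) :
    ‖fderiv ℝ (fun x => t⁻¹ • f (t, x)) x - B‖ ≤ C := by
  have hslice : ∀ r ∈ Icc 0 t, DifferentiableAt ℝ (fun x => f (r, x)) x := fun r hr =>
    differentiableAt_slice_right ((hf r hr).differentiableAt two_ne_zero)
  rw [fderiv_fun_const_smul (hslice t (right_mem_Icc.mpr ht.le))]
  exact norm_inv_smul_sub_le_of_norm_deriv_sub_le (f := fun r => fderiv ℝ (fun x => f (r, x)) x) ht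
    (fderiv_eq_zero_of_eqOn_zero hs hx (hslice 0 (left_mem_Icc.mpr ht.le)) h0)
    (fun r hr => differentiableAt_fderiv_slice (hf r hr)) hC

end Rescaling

section DistanceFunction

open scoped NNReal

variable {X₁ X₂ Y₁ Y₂ : Type*}
  [NormedAddCommGroup X₁] [NormedSpace ℝ X₁] [NormedAddCommGroup X₂] [NormedSpace ℝ X₂]
  [NormedAddCommGroup Y₁] [NormedSpace ℝ Y₁] [NormedAddCommGroup Y₂] [NormedSpace ℝ Y₂]

theorem surjective_fderiv_of_surjective_prod_smul {X : Type*} [NormedAddCommGroup X]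
    [NormedSpace ℝ X] {g : X → Y₁ × Y₂} {x : X} {a : ℝ} (ha : a ≠ 0) (hg : DifferentiableAt ℝ g x)
    (hsurj : Function.Surjective
      ((fderiv ℝ (fun x => (g x).1) x).prod (fderiv ℝ (fun x => a • (g x).2) x))) :
    Function.Surjective (fderiv ℝ g x) := by
  intro u
  obtain ⟨v, hv⟩ := hsurj (u.1, a • u.2)
  rw [fderiv_fun_const_smul hg.snd, fderiv.fst hg, fderiv.snd hg] at hv
  obtain ⟨hv₁, hv₂⟩ := Prod.ext_iff.mp hv
  exact ⟨v, Prod.ext hv₁ (smul_right_injective Y₂ ha hv₂)⟩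

theorem exists_zero_mem_ball_surjective_fderiv [CompleteSpace X₁] [CompleteSpace X₂]
    {y : ℝ × X₁ × X₂ → Y₁ × Y₂} {p : X₁ × X₂} {R ε η₁ η₂ : ℝ} {δ₁ δ₂ : ℝ≥0}
    {A₁₁ : X₁ ≃L[ℝ] Y₁} {A₂₂ : X₂ ≃L[ℝ] Y₂} (hR : 0 < R) (hε : 0 < ε)
    (hy : ∀ t ∈ Icc 0 ε, ∀ x ∈ closedBall p R, ContDiffAt ℝ 2 y (t, x)) (hyp : y (0, p) = 0)
    (hy₂ : ∀ x ∈ closedBall p R, (y (0, x)).2 = 0)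
    (hδ₁ : ∀ x ∈ closedBall p R, ‖fderiv ℝ (fun x => (y (ε, x)).1) x
      - (A₁₁ : X₁ →L[ℝ] Y₁).comp (ContinuousLinearMap.fst ℝ X₁ X₂)‖ ≤ δ₁)
    (hδ₂ : ∀ t ∈ Icc 0 ε, ∀ x ∈ closedBall p R,
      ‖deriv (fun t => fderiv ℝ (fun x => (y (t, x)).2) x) t
        - (A₂₂ : X₂ →L[ℝ] Y₂).comp (ContinuousLinearMap.snd ℝ X₁ X₂)‖ ≤ δ₂)
    (hη₁ : ∀ t ∈ Icc 0 ε, ‖deriv (fun t => (y (t, p)).1) t‖ ≤ η₁)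
    (hη₂ : ∀ t ∈ Icc 0 ε, ‖deriv (fun t => (y (t, p)).2) t‖ ≤ η₂)
    (hm₁ : ε * η₁ + δ₁ * R < ‖(A₁₁.symm : Y₁ →L[ℝ] X₁)‖⁻¹ * R)
    (hm₂ : η₂ + δ₂ * R < ‖(A₂₂.symm : Y₂ →L[ℝ] X₂)‖⁻¹ * R) :
    ∃ x ∈ ball p R, y (ε, x) = 0 ∧ Function.Surjective (fderiv ℝ (fun x => y (ε, x)) x) := by
  have hp : p ∈ closedBall p R := mem_closedBall_self hR.le
  have hdiff : ∀ t ∈ Icc 0 ε, ∀ x ∈ closedBall p R, DifferentiableAt ℝ y (t, x) :=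
    fun t ht x hx => (hy t ht x hx).differentiableAt two_ne_zero
  have hyε : ∀ x ∈ closedBall p R, DifferentiableAt ℝ (fun x => y (ε, x)) x := fun x hx =>
    differentiableAt_slice_right (hdiff ε (right_mem_Icc.mpr hε.le) x hx)
  have hyp' : ∀ t ∈ Icc 0 ε, DifferentiableAt ℝ (fun t => y (t, p)) t := fun t ht =>
    differentiableAt_slice_left (hdiff t ht p hp)
  have he₁ : ‖(y (ε, p)).1‖ ≤ ε * η₁ := by
    have hscaled := norm_inv_smul_sub_le_of_norm_deriv_sub_le (f := fun t => (y (t, p)).1) (v := 0)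
      hε (by simp [hyp]) (fun t ht => (hyp' t ht).fst) (by simpa using hη₁)
    rwa [sub_zero, norm_smul, norm_inv, Real.norm_of_nonneg hε.le, inv_mul_le_iff₀ hε] at hscaled
  have he₂ : ‖ε⁻¹ • (y (ε, p)).2‖ ≤ η₂ := by
    simpa using norm_inv_smul_sub_le_of_norm_deriv_sub_le (f := fun t => (y (t, p)).2) (v := 0)
      hε (by simp [hyp]) (fun t ht => (hyp' t ht).snd) (by simpa using hη₂)
  obtain ⟨x, hx, hx₁, hx₂, hsurj⟩ := exists_common_zero_mem_ball_surjective_fderiv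
    (g₂ := fun x => ε⁻¹ • (y (ε, x)).2) hR
    (fun x hx => (hyε x hx).fst) (fun x hx => (hyε x hx).snd.const_smul ε⁻¹) hδ₁
    (fun x hx => norm_fderiv_inv_smul_sub_le (f := fun u => (y u).2) hε
      (uniqueDiffOn_closedBall p hR x hx) hx (fun t ht => (hy t ht x hx).snd) hy₂
      fun t ht => hδ₂ t ht x hx)
    he₁ he₂ hm₁ hm₂
  have hε' : ε⁻¹ ≠ 0 := inv_ne_zero hε.ne'
  exact ⟨x, hx, Prod.ext hx₁ ((smul_eq_zero_iff_right hε').mp hx₂),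
    surjective_fderiv_of_surjective_prod_smul hε' (hyε x (ball_subset_closedBall hx)) hsurj⟩

end DistanceFunction

section Graphs

theorem exists_graph_add_graph_eq {𝕜 X Y Z : Type*} [Ring 𝕜] [AddCommGroup X] [Module 𝕜 X]
    [AddCommGroup Y] [Module 𝕜 Y] [AddCommGroup Z] [Module 𝕜 Z] {L L' : X × Z →ₗ[𝕜] Y}
    (hsurj : Function.Surjective ((L - L') ∘ₗ LinearMap.inl 𝕜 X Z)) (q : X × Y × Z) :
    ∃ a a' : X × Z, (a.1, L a, a.2) + (a'.1, L' a', a'.2) = q := by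
  obtain ⟨x, y, z⟩ := q
  obtain ⟨v, hv⟩ := hsurj (y - L (0, z) - L' (x, 0))
  refine ⟨(v, z), (x - v, 0), ?_⟩
  have hL : L (v, z) = L (v, 0) + L (0, z) := by simp [← map_add]
  have hL' : L' (x - v, 0) = L' (x, 0) - L' (v, 0) := by simp [← map_sub]
  have hy : L (v, z) + L' (x - v, 0) = y := calc
    L (v, z) + L' (x - v, 0) = (L (v, 0) - L' (v, 0)) + L (0, z) + L' (x, 0) := by
      rw [hL, hL']
      abel
    _ = (y - L (0, z) - L' (x, 0)) + L (0, z) + L' (x, 0) := congrArg (· + _ + _) hv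
    _ = y := by abel
  simp [hy]

variable {𝕜 X Y Z : Type*} [NontriviallyNormedField 𝕜] [NormedAddCommGroup X] [NormedSpace 𝕜 X]
  [NormedAddCommGroup Y] [NormedSpace 𝕜 Y] [NormedAddCommGroup Z] [NormedSpace 𝕜 Z]

theorem fderiv_graph_apply {h : X × Z → Y} {u : X × Z} (hd : DifferentiableAt 𝕜 h u) (a : X × Z) :
    fderiv 𝕜 (fun u : X × Z => (u.1, h u, u.2)) u a = (a.1, fderiv 𝕜 h u a, a.2) := by
  rw [(hasFDerivAt_fst.prodMk (hd.hasFDerivAt.prodMk hasFDerivAt_snd)).fderiv]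
  rfl

theorem exists_fderiv_graph_add_fderiv_graph_eq {h h' : X × Z → Y} {x : X} {z : Z}
    (hd : DifferentiableAt 𝕜 h (x, z)) (hd' : DifferentiableAt 𝕜 h' (x, z))
    (hsurj : Function.Surjective (fderiv 𝕜 (fun x => h (x, z) - h' (x, z)) x)) (q : X × Y × Z) :
    ∃ a a' : X × Z, fderiv 𝕜 (fun u : X × Z => (u.1, h u, u.2)) (x, z) a
      + fderiv 𝕜 (fun u : X × Z => (u.1, h' u, u.2)) (x, z) a' = q := by
  have hslice : fderiv 𝕜 (fun x => h (x, z) - h' (x, z)) x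
      = (fderiv 𝕜 h (x, z) - fderiv 𝕜 h' (x, z)).comp (ContinuousLinearMap.inl 𝕜 X Z) :=
    (HasFDerivAt.comp (g := fun u => h u - h' u) x (hd.hasFDerivAt.sub hd'.hasFDerivAt)
      (hasFDerivAt_prodMk_left x z)).fderiv
  rw [hslice] at hsurj
  simp only [fderiv_graph_apply hd, fderiv_graph_apply hd']
  exact exists_graph_add_graph_eq (L := (fderiv 𝕜 h (x, z)).toLinearMap)
    (L' := (fderiv 𝕜 h' (x, z)).toLinearMap) hsurj q

theorem differentiableAt_comp_slice {T W F : Type*} [NormedAddCommGroup T] [NormedSpace 𝕜 T]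
    [NormedAddCommGroup W] [NormedSpace 𝕜 W] [NormedAddCommGroup F] [NormedSpace 𝕜 F] {E : Set T}
    {S : Set X} {w : T × W → F} {φ : T × X → W} {t : T} {x : X}
    (hw : DifferentiableOn 𝕜 w (E ×ˢ univ)) (hφ : DifferentiableOn 𝕜 φ (E ×ˢ S)) (ht : t ∈ E)
    (hS : S ∈ nhds x) : DifferentiableAt 𝕜 (fun x => w (t, φ (t, x))) x := by
  have hφt : DifferentiableOn 𝕜 (fun x => φ (t, x)) S :=
    hφ.comp (by fun_prop) fun x hx => ⟨ht, hx⟩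
  have hwφ : DifferentiableOn 𝕜 (fun x => w (t, φ (t, x))) S :=
    hw.comp ((differentiableOn_const t).prodMk hφt) fun x _ => ⟨ht, mem_univ _⟩
  exact hwφ.differentiableAt hS

end Graphs

theorem nhim_transversal_intersection_general
    {X₁ X₂ Z : Type*}
    [NormedAddCommGroup X₁] [NormedSpace ℝ X₁] [CompleteSpace X₁]
    [NormedAddCommGroup X₂] [NormedSpace ℝ X₂] [CompleteSpace X₂]
    [NormedAddCommGroup Z] [NormedSpace ℝ Z]
    {ε₀ R : ℝ} (hR : 0 < R) {U : Set (X₁ × X₂)} (hU : IsOpen U) {V : Set Z} (hV : IsOpen V)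
    {wcu wcs : ℝ × ((X₁ × X₂) × Z) → (X₁ × X₂) × (X₁ × X₂) × Z}
    (hwcu : DifferentiableOn ℝ wcu (Icc 0 ε₀ ×ˢ univ))
    (hwcs : DifferentiableOn ℝ wcs (Icc 0 ε₀ ×ˢ univ))
    {cu cs : ℝ × (X₁ × X₂) × Z → (X₁ × X₂) × Z}
    (hcu : DifferentiableOn ℝ cu (Icc 0 ε₀ ×ˢ U ×ˢ V))
    (hcs : DifferentiableOn ℝ cs (Icc 0 ε₀ ×ˢ U ×ˢ V))
    (hcux : ∀ ε ∈ Icc (0 : ℝ) ε₀, ∀ x ∈ U, ∀ z ∈ V,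
      ((wcu (ε, cu (ε, x, z))).1, (wcu (ε, cu (ε, x, z))).2.2) = (x, z))
    (hcsx : ∀ ε ∈ Icc (0 : ℝ) ε₀, ∀ x ∈ U, ∀ z ∈ V,
      ((wcs (ε, cs (ε, x, z))).1, (wcs (ε, cs (ε, x, z))).2.2) = (x, z))
    {zs : Z} (hzs : zs ∈ V) {y : ℝ × (X₁ × X₂) → X₁ × X₂}
    (hydef : ∀ ε ∈ Icc (0 : ℝ) ε₀, ∀ x ∈ U,
      y (ε, x) = (wcu (ε, cu (ε, x, zs))).2.1 - (wcs (ε, cs (ε, x, zs))).2.1)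
    {p : X₁ × X₂} (hpU : closedBall p R ⊆ U)
    (hy : ∀ ε ∈ Icc (0 : ℝ) ε₀, ∀ x ∈ closedBall p R, ContDiffAt ℝ 2 y (ε, x))
    (hyp : y (0, p) = 0) (hy₂ : ∀ x ∈ closedBall p R, (y (0, x)).2 = 0)
    {A₁₁ : X₁ ≃L[ℝ] X₁} {A₂₂ : X₂ ≃L[ℝ] X₂}
    (_hA₁₁ : (A₁₁ : X₁ →L[ℝ] X₁) = fderiv ℝ (fun x₁ => (y (0, (x₁, p.2))).1) p.1)
    (_hA₂₂ : (A₂₂ : X₂ →L[ℝ] X₂)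
      = deriv (fun ε => fderiv ℝ (fun x₂ => (y (ε, (p.1, x₂))).2) p.2) 0)
    {δ₁ δ₂ η₁ η₂ : ℝ}
    (hδ₁ : ∀ ε ∈ Icc (0 : ℝ) ε₀, ∀ x ∈ closedBall p R,
      ‖fderiv ℝ (fun x' => (y (ε, x')).1) x
        - (A₁₁ : X₁ →L[ℝ] X₁).comp (ContinuousLinearMap.fst ℝ X₁ X₂)‖ ≤ δ₁)
    (hδ₂ : ∀ ε ∈ Icc (0 : ℝ) ε₀, ∀ x ∈ closedBall p R,
      ‖deriv (fun ε' => fderiv ℝ (fun x' => (y (ε', x')).2) x) ε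
        - (A₂₂ : X₂ →L[ℝ] X₂).comp (ContinuousLinearMap.snd ℝ X₁ X₂)‖ ≤ δ₂)
    (hη₁ : ∀ ε ∈ Icc (0 : ℝ) ε₀, ‖deriv (fun ε' => (y (ε', p)).1) ε‖ ≤ η₁)
    (hη₂ : ∀ ε ∈ Icc (0 : ℝ) ε₀, ‖deriv (fun ε' => (y (ε', p)).2) ε‖ ≤ η₂)
    (hm₁ : ε₀ * η₁ + δ₁ * R < ‖(A₁₁.symm : X₁ →L[ℝ] X₁)‖⁻¹ * R)
    (hm₂ : η₂ + δ₂ * R < ‖(A₂₂.symm : X₂ →L[ℝ] X₂)‖⁻¹ * R)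
    {ε : ℝ} (hε : ε ∈ Ioc 0 ε₀) :
    ∃ xs ∈ ball p R,
      wcu (ε, cu (ε, xs, zs)) = wcs (ε, cs (ε, xs, zs)) ∧
      ∀ q : (X₁ × X₂) × (X₁ × X₂) × Z,
        ∃ acu acs : (X₁ × X₂) × Z,
          fderiv ℝ (fun w : (X₁ × X₂) × Z =>
              (w.1, (wcu (ε, cu (ε, w.1, w.2))).2.1, w.2)) (xs, zs) acu
          + fderiv ℝ (fun w : (X₁ × X₂) × Z =>
              (w.1, (wcs (ε, cs (ε, w.1, w.2))).2.1, w.2)) (xs, zs) acs = q := by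
  have hεE : ε ∈ Icc 0 ε₀ := Ioc_subset_Icc_self hε
  have hE : Icc 0 ε ⊆ Icc 0 ε₀ := Icc_subset_Icc_right hε.2
  have hpR : p ∈ closedBall p R := mem_closedBall_self hR.le
  have hη₁_nonneg : 0 ≤ η₁ := (norm_nonneg _).trans (hη₁ ε hεE)
  lift δ₁ to NNReal using (norm_nonneg _).trans (hδ₁ ε hεE p hpR)
  lift δ₂ to NNReal using (norm_nonneg _).trans (hδ₂ ε hεE p hpR)
  obtain ⟨xs, hxs, hzero, hsurj⟩ := exists_zero_mem_ball_surjective_fderiv hR hε.1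
    (fun t ht => hy t (hE ht)) hyp hy₂ (hδ₁ ε hεE) (fun t ht => hδ₂ t (hE ht))
    (fun t ht => hη₁ t (hE ht)) (fun t ht => hη₂ t (hE ht))
    (lt_of_le_of_lt (by gcongr; exact hε.2) hm₁) hm₂
  have hxsU : xs ∈ U := hpU (ball_subset_closedBall hxs)
  have hUV : U ×ˢ V ∈ nhds (xs, zs) := prod_mem_nhds (hU.mem_nhds hxsU) (hV.mem_nhds hzs)
  rw [hydef ε hεE xs hxsU, sub_eq_zero] at hzero
  have hydef_near : (fun x => y (ε, x)) =ᶠ[nhds xs]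
      fun x => (wcu (ε, cu (ε, x, zs))).2.1 - (wcs (ε, cs (ε, x, zs))).2.1 :=
    Filter.eventually_of_mem (hU.mem_nhds hxsU) (hydef ε hεE)
  rw [hydef_near.fderiv_eq] at hsurj
  obtain ⟨hx, hz⟩ := Prod.ext_iff.mp
    ((hcux ε hεE xs hxsU zs hzs).trans (hcsx ε hεE xs hxsU zs hzs).symm)
  exact ⟨xs, hxs, Prod.ext hx (Prod.ext hzero hz), exists_fderiv_graph_add_fderiv_graph_eq
    (differentiableAt_comp_slice hwcu hcu hεE hUV).snd.fst
    (differentiableAt_comp_slice hwcs hcs hεE hUV).snd.fst hsurj⟩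

/-- **Transversal intersection of center-unstable and center-stable manifolds.**
In the NHIM setting with equal-dimensional stable and unstable directions, with
`ℝ^k` identified with `X₁ × X₂` and the distance function satisfying the
quantitative hypotheses (⋆), for fixed `ε ∈ (0,ε₀]` there is `x* ∈ B(p,R)` at which
the manifolds meet, and the ranges of the derivatives of the graph
parameterizations `G^{cu}(x,z) = (x, π_y w^{cu}(ε,cu(ε,x,z)), z)` and
`G^{cs}(x,z) = (x, π_y w^{cs}(ε,cs(ε,x,z)), z)` at `(x*,z*)` span `ℝ^{2k+c}`. -/
theorem nhim_transversal_intersection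
    {X₁ X₂ : Type*}
    [NormedAddCommGroup X₁] [NormedSpace ℝ X₁] [FiniteDimensional ℝ X₁]
    [NormedAddCommGroup X₂] [NormedSpace ℝ X₂] [FiniteDimensional ℝ X₂]
    (c : ℕ) (hc : 1 ≤ c) (ε₀ R : ℝ) (hε₀ : 0 < ε₀) (hR : 0 < R)
    (U : Set (X₁ × X₂)) (hU : IsOpen U)
    (V : Set (Fin c → ℝ)) (hV : IsOpen V)
    (wcu wcs : ℝ × ((X₁ × X₂) × (Fin c → ℝ)) →
      (X₁ × X₂) × (X₁ × X₂) × (Fin c → ℝ))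
    (hwcu : ContDiffOn ℝ 2 wcu
      (Icc 0 ε₀ ×ˢ (univ : Set ((X₁ × X₂) × (Fin c → ℝ)))))
    (hwcs : ContDiffOn ℝ 2 wcs
      (Icc 0 ε₀ ×ˢ (univ : Set ((X₁ × X₂) × (Fin c → ℝ)))))
    (cu cs : ℝ × (X₁ × X₂) × (Fin c → ℝ) → (X₁ × X₂) × (Fin c → ℝ))
    (hcu : ContDiffOn ℝ 2 cu (Icc 0 ε₀ ×ˢ U ×ˢ V))
    (hcs : ContDiffOn ℝ 2 cs (Icc 0 ε₀ ×ˢ U ×ˢ V))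
    (hcux : ∀ ε ∈ Icc (0:ℝ) ε₀, ∀ x ∈ U, ∀ z ∈ V,
      ((wcu (ε, cu (ε, x, z))).1, (wcu (ε, cu (ε, x, z))).2.2) = (x, z))
    (hcsx : ∀ ε ∈ Icc (0:ℝ) ε₀, ∀ x ∈ U, ∀ z ∈ V,
      ((wcs (ε, cs (ε, x, z))).1, (wcs (ε, cs (ε, x, z))).2.2) = (x, z))
    (zs : Fin c → ℝ) (hzs : zs ∈ V)
    (y : ℝ × (X₁ × X₂) → X₁ × X₂)
    (hydef : ∀ ε x, y (ε, x)
      = (wcu (ε, cu (ε, x, zs))).2.1 - (wcs (ε, cs (ε, x, zs))).2.1)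
    (p : X₁ × X₂) (hpU : closedBall p R ⊆ U)
    (hy : ContDiff ℝ 2 y)
    (hyp : y (0, p) = 0)
    (hy₂ : ∀ x ∈ closedBall p R, (y (0, x)).2 = 0)
    (A₁₁ : X₁ ≃L[ℝ] X₁) (A₂₂ : X₂ ≃L[ℝ] X₂)
    (hA₁₁ : (A₁₁ : X₁ →L[ℝ] X₁) = fderiv ℝ (fun x₁ => (y (0, (x₁, p.2))).1) p.1)
    (hA₂₂ : (A₂₂ : X₂ →L[ℝ] X₂)
      = deriv (fun ε => fderiv ℝ (fun x₂ => (y (ε, (p.1, x₂))).2) p.2) 0)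
    (δ₁ δ₂ η₁ η₂ : ℝ)
    (hδ₁0 : 0 ≤ δ₁) (hδ₂0 : 0 ≤ δ₂) (hη₁0 : 0 ≤ η₁) (hη₂0 : 0 ≤ η₂)
    (hδ₁ : ∀ ε ∈ Icc (0:ℝ) ε₀, ∀ x ∈ closedBall p R,
      ‖fderiv ℝ (fun x' => (y (ε, x')).1) x
        - (A₁₁ : X₁ →L[ℝ] X₁).comp (ContinuousLinearMap.fst ℝ X₁ X₂)‖ ≤ δ₁)
    (hδ₂ : ∀ ε ∈ Icc (0:ℝ) ε₀, ∀ x ∈ closedBall p R,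
      ‖deriv (fun ε' => fderiv ℝ (fun x' => (y (ε', x')).2) x) ε
        - (A₂₂ : X₂ →L[ℝ] X₂).comp (ContinuousLinearMap.snd ℝ X₁ X₂)‖ ≤ δ₂)
    (hη₁ : ∀ ε ∈ Icc (0:ℝ) ε₀, ‖deriv (fun ε' => (y (ε', p)).1) ε‖ ≤ η₁)
    (hη₂ : ∀ ε ∈ Icc (0:ℝ) ε₀, ‖deriv (fun ε' => (y (ε', p)).2) ε‖ ≤ η₂)
    (hm₁ : ε₀ * η₁ + δ₁ * R < ‖(A₁₁.symm : X₁ →L[ℝ] X₁)‖⁻¹ * R)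
    (hm₂ : η₂ + δ₂ * R < ‖(A₂₂.symm : X₂ →L[ℝ] X₂)‖⁻¹ * R)
    (ε : ℝ) (hε : ε ∈ Ioc 0 ε₀) :
    ∃ xs ∈ ball p R,
      wcu (ε, cu (ε, xs, zs)) = wcs (ε, cs (ε, xs, zs)) ∧
      ∀ q : (X₁ × X₂) × (X₁ × X₂) × (Fin c → ℝ),
        ∃ acu acs : (X₁ × X₂) × (Fin c → ℝ),
          fderiv ℝ (fun w : (X₁ × X₂) × (Fin c → ℝ) =>
              (w.1, (wcu (ε, cu (ε, w.1, w.2))).2.1, w.2)) (xs, zs) acu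
          + fderiv ℝ (fun w : (X₁ × X₂) × (Fin c → ℝ) =>
              (w.1, (wcs (ε, cs (ε, w.1, w.2))).2.1, w.2)) (xs, zs) acs = q := by
  have := FiniteDimensional.complete ℝ X₁
  have := FiniteDimensional.complete ℝ X₂
  exact nhim_transversal_intersection_general hR hU hV
    (hwcu.differentiableOn two_ne_zero) (hwcs.differentiableOn two_ne_zero)
    (hcu.differentiableOn two_ne_zero) (hcs.differentiableOn two_ne_zero) hcux hcsx hzs
    (fun ε _ x _ => hydef ε x) hpU (fun _ _ _ _ => hy.contDiffAt) hyp hy₂ hA₁₁ hA₂₂ hδ₁ hδ₂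
    hη₁ hη₂ hm₁ hm₂ hε
end
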